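/- For every complex s with Re(s) > 1, ∑'_{(m,k)} [ 1/(2m² + mk + 2k²)^s + 1/(m² + mk + 4k²)^s ] = 2·ζ(s)·L(χ_{-15}, s), where ζ is the Riemann zeta function. -/

import Mathlib

/-- The quadratic Dirichlet character modulo 3:
`χ₋₃(n) = 1` if `n ≡ 1 (mod 3)`, `-1` if `n ≡ 2 (mod 3)`, `0` if `3 ∣ n`. -/
def chiNeg3 (n : ℕ) : ℤ :=
  if n % 3 = 1 then 1 else if n % 3 = 2 then -1 else 0

/-- The quadratic Dirichlet character modulo 5 given by the Legendre symbol `(n/5)`. -/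
def chi5 (n : ℕ) : ℤ :=
  if n % 5 = 1 ∨ n % 5 = 4 then 1 else if n % 5 = 2 ∨ n % 5 = 3 then -1 else 0

/-- The quadratic Dirichlet character modulo 15, `χ₋₁₅(n) = (n/3)·(n/5)`. -/
def chiNeg15 (n : ℕ) : ℤ := chiNeg3 n * chi5 n

/-- The Dirichlet `L`-series `L(χ, s) = ∑_{n ≥ 1} χ(n) n^{-s}`. -/
noncomputable def LSer (χ : ℕ → ℤ) (s : ℂ) : ℂ :=
  ∑' n : ℕ, (χ (n + 1) : ℂ) / ((n : ℂ) + 1) ^ s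

/-!
By homogeneity, the sum over nonzero vectors is `ζ(2s)` times the sum over primitive vectors. A
proper representation of `n` by a form `f` is the first column of some `γ ∈ SL(2, ℤ)`, and `γ`
becomes unique once the middle coefficient of `f ∘ γ` is normalized modulo `2n`. Every positive
form of discriminant `-15` is `f ∘ γ` for exactly two pairs `(f, γ)` with `f` one of the two forms
of the theorem: the class number is two and the automorphs are `±1`. Hence these forms have `2 ρ(n)`
proper representations of `n`, where `ρ(n)` is the number of roots of `x² + x + 4` modulo `n`.

Comparing values at prime powers, with Hensel lifting and quadratic reciprocity, gives
`ρ = μ² * χ₋₁₅` as a Dirichlet convolution. The sum over primitive vectors is therefore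
`2 L(μ², s) L(χ₋₁₅, s)`, and `ζ(2s) L(μ², s) = ζ(s)` by Euler products.
-/

/-! ### Roots of polynomials modulo `n` -/

section RootCount

open Polynomial

lemma isUnit_of_isUnit_map_of_isNilpotent_ker {R S : Type*} [CommRing R] [CommRing S]
    {φ : R →+* S} (hφ : Function.Surjective φ) (hker : ∀ x, φ x = 0 → IsNilpotent x) {x : R}
    (hx : IsUnit (φ x)) : IsUnit x := by
  obtain ⟨y, hy⟩ := hφ ↑hx.unit⁻¹
  have hnil : IsNilpotent (x * y - 1) :=
    hker _ (by rw [map_sub, map_mul, hy, IsUnit.mul_val_inv, map_one, sub_self])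
  exact isUnit_of_mul_isUnit_left (by simpa using hnil.isUnit_add_one)

lemma card_roots_eq_of_isNilpotent_ker {R S : Type*} [CommRing R] [CommRing S] {φ : R →+* S}
    (hφ : Function.Surjective φ) (hker : ∀ x, φ x = 0 → IsNilpotent x) {P : ℤ[X]}
    (hP : ∀ y : S, aeval y P = 0 → IsUnit (aeval y (derivative P))) :
    Nat.card {x : R // aeval x P = 0} = Nat.card {y : S // aeval y P = 0} := by
  have haeval (x : R) (Q : ℤ[X]) : φ (aeval x Q) = aeval (φ x) Q :=
    (aeval_algHom_apply φ.toIntAlgHom x Q).symm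
  have hlift (x : R) (hx : aeval (φ x) P = 0) : ∃! r, φ r = φ x ∧ aeval r P = 0 := by
    have hunit : IsUnit (aeval x (derivative P)) :=
      isUnit_of_isUnit_map_of_isNilpotent_ker hφ hker (by rw [haeval]; exact hP _ hx)
    obtain ⟨r, ⟨hnil, hr⟩, hunique⟩ := existsUnique_nilpotent_sub_and_aeval_eq_zero
      (hker _ (by rw [haeval, hx])) hunit
    refine ⟨r, ⟨?_, hr⟩, fun r' ⟨hr', hroot⟩ ↦
      hunique r' ⟨hker _ (by rw [map_sub, hr', sub_self]), hroot⟩⟩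
    have hS := existsUnique_nilpotent_sub_and_aeval_eq_zero (P := P) (x := φ x)
      (by rw [hx]; exact IsNilpotent.zero) (hP _ hx)
    exact hS.unique ⟨by rw [← map_sub]; exact hnil.map φ, by rw [← haeval, hr, map_zero]⟩
      ⟨by rw [sub_self]; exact IsNilpotent.zero, hx⟩
  refine Nat.card_eq_of_bijective
    (fun x ↦ ⟨φ x.1, by rw [← haeval, x.2, map_zero]⟩) ⟨fun x x' h ↦ ?_, fun ⟨y, hy⟩ ↦ ?_⟩
  · have hφx : φ x.1 = φ x'.1 := congrArg (·.1) h
    have hx : aeval (φ x.1) P = 0 := by rw [← haeval, x.2, map_zero]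
    exact Subtype.ext ((hlift x.1 hx).unique ⟨rfl, x.2⟩ ⟨hφx.symm, x'.2⟩)
  · obtain ⟨x, rfl⟩ := hφ y
    obtain ⟨r, ⟨hr, hroot⟩, -⟩ := hlift x hy
    exact ⟨⟨r, hroot⟩, Subtype.ext hr⟩

/-- The number of roots of `P` modulo `n`, as a function of `n`. -/
noncomputable def rootCount (P : ℤ[X]) : ArithmeticFunction ℕ where
  toFun n := if n = 0 then 0 else Nat.card {x : ZMod n // aeval x P = 0}
  map_zero' := if_pos rfl

lemma rootCount_apply (P : ℤ[X]) {n : ℕ} (hn : n ≠ 0) :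
    rootCount P n = Nat.card {x : ZMod n // aeval x P = 0} :=
  if_neg hn

lemma isMultiplicative_rootCount (P : ℤ[X]) : (rootCount P).IsMultiplicative := by
  refine ArithmeticFunction.IsMultiplicative.iff_ne_zero.2 ⟨?_, fun {m n} hm hn hmn ↦ ?_⟩
  · rw [rootCount_apply P one_ne_zero, Nat.card_eq_one_iff_unique]
    exact ⟨inferInstance, ⟨0, Subsingleton.elim _ _⟩⟩
  · rw [rootCount_apply P hm, rootCount_apply P hn, rootCount_apply P (mul_ne_zero hm hn),
      ← Nat.card_prod]
    let φ := ZMod.chineseRemainder hmn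
    refine Nat.card_congr ((φ.toEquiv.subtypeEquiv fun x ↦ ?_).trans
      (Equiv.subtypeProdEquivProd (p := fun y ↦ aeval y P = 0) (q := fun z ↦ aeval z P = 0)))
    have hφ : aeval (φ x) P = φ (aeval x P) :=
      aeval_algHom_apply (φ : ZMod (m * n) →+* ZMod m × ZMod n).toIntAlgHom x P
    rw [← map_eq_zero_iff φ φ.injective, ← hφ, aeval_prod_apply, Prod.mk_eq_zero]
    rfl

lemma rootCount_prime_pow_of_isUnit {p : ℕ} (hp : p.Prime) {P : ℤ[X]}
    (hP : ∀ y : ZMod p, aeval y P = 0 → IsUnit (aeval y (derivative P))) (k : ℕ) :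
    rootCount P (p ^ (k + 1)) = rootCount P p := by
  rw [rootCount_apply P (pow_ne_zero _ hp.ne_zero), rootCount_apply P hp.ne_zero]
  have hdvd : p ∣ p ^ (k + 1) := dvd_pow_self p k.succ_ne_zero
  refine card_roots_eq_of_isNilpotent_ker (φ := ZMod.castHom hdvd (ZMod p))
    (ZMod.castHom_surjective hdvd) (fun x hx ↦ ⟨k + 1, ?_⟩) hP
  obtain ⟨m, rfl⟩ := ZMod.intCast_surjective x
  rw [map_intCast, ZMod.intCast_zmod_eq_zero_iff_dvd] at hx
  rw [← Int.cast_pow, ZMod.intCast_zmod_eq_zero_iff_dvd, Nat.cast_pow]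
  exact pow_dvd_pow_of_dvd hx _

/-- The monic quadratic polynomial with linear coefficient `t` and constant coefficient `N`. -/
noncomputable def monicQuadratic (t N : ℤ) : ℤ[X] := X ^ 2 + C t * X + C N

@[simp]
lemma aeval_monicQuadratic {R : Type*} [CommRing R] (t N : ℤ) (x : R) :
    aeval x (monicQuadratic t N) = x ^ 2 + t * x + N := by
  simp [monicQuadratic]

@[simp]
lemma aeval_derivative_monicQuadratic {R : Type*} [CommRing R] (t N : ℤ) (x : R) :
    aeval x (derivative (monicQuadratic t N)) = 2 * x + t := by
  simp [monicQuadratic, map_ofNat]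

lemma rootCount_monicQuadratic_prime_pow {p : ℕ} (hp : p.Prime) {t N : ℤ}
    (hD : ¬(p : ℤ) ∣ t ^ 2 - 4 * N) (k : ℕ) :
    rootCount (monicQuadratic t N) (p ^ (k + 1)) = rootCount (monicQuadratic t N) p := by
  have := Fact.mk hp
  refine rootCount_prime_pow_of_isUnit hp (fun y hy ↦ isUnit_iff_ne_zero.2 fun hy' ↦ hD ?_) k
  rw [aeval_monicQuadratic] at hy
  rw [aeval_derivative_monicQuadratic] at hy'
  rw [← ZMod.intCast_zmod_eq_zero_iff_dvd]
  push_cast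
  linear_combination (2 * y + t) * hy' - 4 * hy

lemma rootCount_monicQuadratic_prime_pow_of_dvd {p : ℕ} (hp : p.Prime) {t N : ℤ}
    (hD : (p : ℤ) ∣ t ^ 2 - 4 * N) (hD' : ¬(p : ℤ) ^ 2 ∣ t ^ 2 - 4 * N) (k : ℕ) :
    rootCount (monicQuadratic t N) (p ^ (k + 2)) = 0 := by
  rw [rootCount_apply _ (pow_ne_zero _ hp.ne_zero), Nat.card_eq_zero]
  refine Or.inl ⟨fun ⟨x, hx⟩ ↦ hD' ?_⟩
  obtain ⟨β, rfl⟩ := ZMod.intCast_surjective x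
  have hβ : (p : ℤ) ^ 2 ∣ β ^ 2 + t * β + N := by
    have : ((β ^ 2 + t * β + N : ℤ) : ZMod (p ^ (k + 2))) = 0 := by simpa using hx
    rw [ZMod.intCast_zmod_eq_zero_iff_dvd, Nat.cast_pow] at this
    exact (pow_dvd_pow _ (Nat.le_add_left 2 k)).trans this
  have hsq : (2 * β + t) ^ 2 = 4 * (β ^ 2 + t * β + N) + (t ^ 2 - 4 * N) := by ring
  have hp' : (p : ℤ) ∣ 2 * β + t := (Nat.prime_iff_prime_int.1 hp).dvd_of_dvd_pow (n := 2) <| by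
    rw [hsq]
    exact dvd_add (((dvd_pow_self _ two_ne_zero).trans hβ).mul_left 4) hD
  rw [← dvd_add_right (hβ.mul_left 4), ← hsq]
  exact pow_dvd_pow_of_dvd hp' 2

lemma rootCount_monicQuadratic_prime {p : ℕ} [Fact p.Prime] (hp : p ≠ 2) (t N : ℤ) :
    (rootCount (monicQuadratic t N) p : ℤ) = 1 + legendreSym p (t ^ 2 - 4 * N) := by
  have h2 : (2 : ZMod p) ≠ 0 := Ring.two_ne_zero (by rwa [ZMod.ringChar_zmod_n])
  have h4 : (4 : ZMod p) ≠ 0 := by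
    rw [show (4 : ZMod p) = 2 * 2 by norm_num]
    exact mul_ne_zero h2 h2
  rw [add_comm, ← legendreSym.card_sqrts p hp, rootCount_apply _ (Fact.out : p.Prime).ne_zero,
    ← Nat.card_eq_card_toFinset]
  congr 1
  refine Nat.card_congr (((Equiv.mulLeft₀ 2 h2).trans (Equiv.addRight (t : ZMod p))).subtypeEquiv
    fun x ↦ ?_)
  change _ ↔ (2 * x + t) ^ 2 = ((t ^ 2 - 4 * N : ℤ) : ZMod p)
  have hsq : (2 * x + t) ^ 2 - ((t ^ 2 - 4 * N : ℤ) : ZMod p) = 4 * (x ^ 2 + t * x + N) := by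
    push_cast
    ring
  rw [aeval_monicQuadratic, ← sub_eq_zero (a := (2 * x + t) ^ 2), hsq, mul_eq_zero_iff_left h4]

end RootCount

/-! ### Binary quadratic forms -/

open scoped MatrixGroups

/-- The integral binary quadratic form `a x² + b x y + c y²`. -/
@[ext]
structure BinaryForm where
  a : ℤ
  b : ℤ
  c : ℤ

namespace BinaryForm

/-- The value of a form at the integer vector `(x, y)`. -/
def eval (f : BinaryForm) (x y : ℤ) : ℤ := f.a * x ^ 2 + f.b * x * y + f.c * y ^ 2

/-- The discriminant `b² - 4 a c` of a form. -/
def disc (f : BinaryForm) : ℤ := f.b ^ 2 - 4 * f.a * f.c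

/-- The form `(x, y) ↦ f (γ (x, y))`; this is a right action of `SL(2, ℤ)` on forms. -/
def comp (f : BinaryForm) (γ : SL(2, ℤ)) : BinaryForm where
  a := f.eval (γ 0 0) (γ 1 0)
  b := 2 * f.a * γ 0 0 * γ 0 1 + f.b * (γ 0 0 * γ 1 1 + γ 0 1 * γ 1 0) + 2 * f.c * γ 1 0 * γ 1 1
  c := f.eval (γ 0 1) (γ 1 1)

lemma det_eq_one (γ : SL(2, ℤ)) : γ 0 0 * γ 1 1 - γ 0 1 * γ 1 0 = 1 := by
  rw [← Matrix.det_fin_two, γ.det_coe]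

@[simp]
lemma comp_one (f : BinaryForm) : f.comp 1 = f := by
  ext <;> simp [comp, eval]

lemma comp_mul (f : BinaryForm) (γ δ : SL(2, ℤ)) : f.comp (γ * δ) = (f.comp γ).comp δ := by
  ext <;>
    · simp only [comp, eval, Matrix.SpecialLinearGroup.coe_mul, Matrix.mul_apply, Fin.sum_univ_two]
      ring

lemma comp_eq_iff_eq_comp_inv {f g : BinaryForm} {γ : SL(2, ℤ)} :
    f.comp γ = g ↔ f = g.comp γ⁻¹ := by
  constructor <;> rintro rfl <;> simp [← comp_mul]

@[simp]
lemma comp_neg (f : BinaryForm) (γ : SL(2, ℤ)) : f.comp (-γ) = f.comp γ := by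
  ext <;> simp [comp, eval]

lemma disc_comp (f : BinaryForm) (γ : SL(2, ℤ)) : (f.comp γ).disc = f.disc := by
  have hγ := det_eq_one γ
  calc (f.comp γ).disc = f.disc * (γ 0 0 * γ 1 1 - γ 0 1 * γ 1 0) ^ 2 := by
        simp only [comp, disc, eval]; ring
    _ = f.disc := by rw [hγ]; ring

lemma comp_T_zpow (f : BinaryForm) (t : ℤ) :
    f.comp (ModularGroup.T ^ t) = ⟨f.a, f.b + 2 * f.a * t, f.eval t 1⟩ := by
  ext
  · simp [comp, eval, ModularGroup.coe_T_zpow]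
  · simp [comp, ModularGroup.coe_T_zpow]
    ring
  · simp [comp, ModularGroup.coe_T_zpow]

lemma comp_S (f : BinaryForm) : f.comp ModularGroup.S = ⟨f.c, -f.b, f.a⟩ := by
  ext <;> simp [comp, eval, ModularGroup.coe_S]

lemma eval_mul (f : BinaryForm) (d x y : ℤ) : f.eval (d * x) (d * y) = d ^ 2 * f.eval x y := by
  simp only [eval]; ring

lemma eval_pos {f : BinaryForm} (ha : 0 < f.a) (hD : f.disc < 0) {x y : ℤ} (hxy : (x, y) ≠ 0) :
    0 < f.eval x y := by
  have key : 4 * f.a * f.eval x y = (2 * f.a * x + f.b * y) ^ 2 + -f.disc * y ^ 2 := by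
    simp only [eval, disc]; ring
  suffices 0 < 4 * f.a * f.eval x y from pos_of_mul_pos_right this (by positivity)
  rw [key]
  have hD' : 0 < -f.disc := by lia
  rcases eq_or_ne y 0 with rfl | hy
  · have hx : x ≠ 0 := by simpa using hxy
    have : 2 * f.a * x + f.b * 0 ≠ 0 := by simp [ha.ne', hx]
    positivity
  · positivity

lemma comp_a_pos {f : BinaryForm} (ha : 0 < f.a) (hD : f.disc < 0) (γ : SL(2, ℤ)) :
    0 < (f.comp γ).a := by
  refine eval_pos ha hD fun h ↦ ?_
  have hx : γ 0 0 = 0 := congrArg Prod.fst h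
  have hy : γ 1 0 = 0 := congrArg Prod.snd h
  simpa [hx, hy] using det_eq_one γ

/-! ### Proper representations -/

lemma exists_eq_mul_T_zpow {γ δ : SL(2, ℤ)} (h₀ : δ 0 0 = γ 0 0) (h₁ : δ 1 0 = γ 1 0) :
    ∃ t : ℤ, δ = γ * ModularGroup.T ^ t := by
  have hγ := det_eq_one γ
  have hδ := det_eq_one δ
  rw [h₀, h₁] at hδ
  refine ⟨γ 1 1 * δ 0 1 - γ 0 1 * δ 1 1, ?_⟩
  ext i j
  fin_cases i <;> fin_cases j <;>
    simp [ModularGroup.coe_T_zpow, Matrix.mul_apply, Fin.sum_univ_two, h₀, h₁]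
  · linear_combination γ 0 1 * hδ - δ 0 1 * hγ
  · linear_combination γ 1 1 * hδ - δ 1 1 * hγ

lemma existsUnique_comp_b_mem_Ico (f : BinaryForm) {x y : ℤ} (hxy : IsCoprime x y)
    (hf : 0 < f.eval x y) (t : ℤ) :
    ∃! γ : SL(2, ℤ), (γ 0 0 = x ∧ γ 1 0 = y) ∧
      (f.comp γ).b ∈ Set.Ico t (t + 2 * f.eval x y) := by
  obtain ⟨γ, rfl, rfl⟩ := hxy.exists_SL2_col 0
  have hshift (k : ℤ) : (f.comp (γ * ModularGroup.T ^ k)).b =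
      (f.comp γ).b + k • (2 * f.eval (γ 0 0) (γ 1 0)) := by
    rw [comp_mul, comp_T_zpow, smul_eq_mul, mul_comm k]
    rfl
  obtain ⟨k, hk, hunique⟩ :=
    existsUnique_add_zsmul_mem_Ico (a := 2 * f.eval (γ 0 0) (γ 1 0)) (by positivity) (f.comp γ).b t
  refine ⟨γ * ModularGroup.T ^ k, ⟨?_, by rwa [hshift]⟩, ?_⟩
  · simp [ModularGroup.coe_T_zpow, Matrix.mul_apply, Fin.sum_univ_two]
  · rintro δ ⟨⟨h₀, h₁⟩, hδ⟩
    obtain ⟨l, rfl⟩ := exists_eq_mul_T_zpow h₀ h₁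
    rw [hunique l (by simpa only [hshift] using hδ)]

/-- The forms of discriminant `D` with first coefficient `n` and middle coefficient in
`[t, t + 2 n)`: representatives of the forms `n x² + b x y + c y²` modulo `x ↦ x + k y`. -/
def normalizedForms (D n t : ℤ) : Set BinaryForm :=
  {g | g.disc = D ∧ g.a = n ∧ g.b ∈ Set.Ico t (t + 2 * n)}

/-- The proper representations of `n` by the members of the family `F`. -/
abbrev ProperRep {ι : Type*} (F : ι → BinaryForm) (n : ℤ) : Type _ :=
  {r : ι × {v : ℤ × ℤ // IsCoprime v.1 v.2} // (F r.1).eval r.2.1.1 r.2.1.2 = n}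

section ProperRep

variable {ι : Type*} {F : ι → BinaryForm} {D n : ℤ}

/-- A proper representation of `n` by `F i` is the first column of exactly one `γ ∈ SL(2, ℤ)` that
makes `(F i).comp γ` normalized. -/
noncomputable def normalizedPairEquivProperRep (hF : ∀ i, (F i).disc = D) (hn : 0 < n) (t : ℤ) :
    {q : ι × SL(2, ℤ) // (F q.1).comp q.2 ∈ normalizedForms D n t} ≃ ProperRep F n :=
  Equiv.ofBijective
    (fun q ↦ ⟨(q.1.1, ⟨(q.1.2 0 0, q.1.2 1 0), q.1.2.isCoprime_col 0⟩), q.2.2.1⟩) <| by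
    constructor
    · rintro ⟨⟨i, γ⟩, hγ⟩ ⟨⟨j, δ⟩, hδ⟩ h
      have hi : i = j := congrArg (·.1.1) h
      have h₀ : γ 0 0 = δ 0 0 := congrArg (·.1.2.1.1) h
      have h₁ : γ 1 0 = δ 1 0 := congrArg (·.1.2.1.2) h
      subst hi
      have ha : (F i).eval (γ 0 0) (γ 1 0) = n := hγ.2.1
      have hunique := (F i).existsUnique_comp_b_mem_Ico (γ.isCoprime_col 0) (by rwa [ha]) t
      rw [ha] at hunique
      obtain rfl := hunique.unique ⟨⟨rfl, rfl⟩, hγ.2.2⟩ ⟨⟨h₀.symm, h₁.symm⟩, hδ.2.2⟩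
      rfl
    · rintro ⟨⟨i, ⟨x, y⟩, hxy⟩, rfl⟩
      obtain ⟨γ, ⟨⟨rfl, rfl⟩, hb⟩, -⟩ := (F i).existsUnique_comp_b_mem_Ico hxy hn t
      exact ⟨⟨(i, γ), by rw [disc_comp, hF], rfl, hb⟩, rfl⟩

/-- Proper representations of `n` grouped by the normalized form they produce. -/
noncomputable def sigmaEquivProperRep (hF : ∀ i, (F i).disc = D) (hn : 0 < n) (t : ℤ) :
    (Σ g : normalizedForms D n t, {q : ι × SL(2, ℤ) // (F q.1).comp q.2 = g}) ≃ ProperRep F n :=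
  (Equiv.sigmaSubtypeFiberEquivSubtype (fun q : ι × SL(2, ℤ) ↦ (F q.1).comp q.2)
    fun _ ↦ Iff.rfl).trans (normalizedPairEquivProperRep hF hn t)

/-- `F` is a complete system of positive definite forms of discriminant `D`: each such form is
`(F i).comp γ` for exactly `w` pairs `(i, γ)`, so that `w` counts the automorphs of a form. -/
structure IsCompleteSystem (F : ι → BinaryForm) (D : ℤ) (w : ℕ) : Prop where
  a_pos (i : ι) : 0 < (F i).a
  disc_eq (i : ι) : (F i).disc = D
  card_comp_eq {g : BinaryForm} (hD : g.disc = D) (ha : 0 < g.a) :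
    Nat.card {q : ι × SL(2, ℤ) // (F q.1).comp q.2 = g} = w

namespace IsCompleteSystem

variable {w : ℕ} (hF : IsCompleteSystem F D w)

include hF

lemma isEmpty_properRep (hD : D < 0) (hn : n ≤ 0) : IsEmpty (ProperRep F n) := by
  refine ⟨fun ⟨⟨i, ⟨x, y⟩, hxy⟩, hr⟩ ↦ hn.not_gt ?_⟩
  rw [← hr]
  refine eval_pos (hF.a_pos i) (by rwa [hF.disc_eq]) fun h ↦ ?_
  obtain ⟨rfl, rfl⟩ := Prod.mk_eq_zero.1 h
  exact not_isCoprime_zero_zero hxy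

variable [NeZero w] {t : ℤ}

lemma finite_comp_eq (g : normalizedForms D n t) (hn : 0 < n) :
    Finite {q : ι × SL(2, ℤ) // (F q.1).comp q.2 = g} :=
  Nat.finite_of_card_ne_zero <| by
    rw [hF.card_comp_eq g.2.1 (by rwa [g.2.2.1])]
    exact NeZero.ne w

lemma finite_properRep (hn : 0 < n) (hfin : (normalizedForms D n t).Finite) :
    Finite (ProperRep F n) := by
  have := hfin.to_subtype
  have (g : normalizedForms D n t) := hF.finite_comp_eq g hn
  exact Finite.of_equiv _ (sigmaEquivProperRep hF.disc_eq hn t)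

lemma card_properRep (hn : 0 < n) (hfin : (normalizedForms D n t).Finite) :
    Nat.card (ProperRep F n) = w * (normalizedForms D n t).ncard := by
  have := hfin.fintype
  have (g : normalizedForms D n t) := hF.finite_comp_eq g hn
  have hcard (g : normalizedForms D n t) :
      Nat.card {q : ι × SL(2, ℤ) // (F q.1).comp q.2 = g} = w :=
    hF.card_comp_eq g.2.1 (by rwa [g.2.2.1])
  rw [← Nat.card_congr (sigmaEquivProperRep hF.disc_eq hn t), Nat.card_sigma]
  simp only [hcard, Finset.sum_const, smul_eq_mul, Finset.card_univ, mul_comm w,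
    ← Nat.card_eq_fintype_card, Nat.card_coe_set_eq]

end IsCompleteSystem

end ProperRep

/-! ### Normalized forms and roots modulo `n` -/

/-- A normalized form of discriminant `t² - 4 N` has middle coefficient `t + 2 β` with `β` a root
of `monicQuadratic t N` modulo its first coefficient. -/
noncomputable def rootsEquivNormalizedForms (t N : ℤ) (n : ℕ) [NeZero n] :
    {x : ZMod n // Polynomial.aeval x (monicQuadratic t N) = 0} ≃
      normalizedForms (t ^ 2 - 4 * N) n t :=
  have hroot (β : ℤ) : Polynomial.aeval (β : ZMod n) (monicQuadratic t N) = 0 ↔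
      (n : ℤ) ∣ β ^ 2 + t * β + N := by
    simp [← ZMod.intCast_zmod_eq_zero_iff_dvd]
  have hval (x : ZMod n) : ((x.val : ℤ) : ZMod n) = x := by simp
  Equiv.ofBijective
    (fun x ↦ ⟨⟨n, t + 2 * x.1.val, ((x.1.val : ℤ) ^ 2 + t * x.1.val + N) / n⟩, by
      have hdvd := (hroot x.1.val).1 (by rw [hval, x.2])
      have hlt := x.1.val_lt
      refine ⟨?_, rfl, ?_⟩
      · simp only [disc]
        linear_combination -4 * Int.mul_ediv_cancel' hdvd
      · simp only [Set.mem_Ico]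
        lia⟩) <| by
    constructor
    · intro x y h
      have hb : t + 2 * (x.1.val : ℤ) = t + 2 * (y.1.val : ℤ) := congrArg (·.1.b) h
      exact Subtype.ext <| ZMod.val_injective n <| Nat.cast_injective <|
        mul_left_cancel₀ (two_ne_zero' ℤ) (add_left_cancel hb)
    · rintro ⟨⟨a, b, c⟩, hdisc, ha, hb₀, hb₁⟩
      obtain rfl : a = n := ha
      simp only [disc] at hdisc hb₀ hb₁
      obtain ⟨β, hβ⟩ : 2 ∣ b - t := Int.prime_two.dvd_of_dvd_pow (n := 2)
        ⟨t ^ 2 - b * t + 2 * n * c - 2 * N, by linear_combination hdisc⟩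
      obtain rfl : b = t + 2 * β := by lia
      have hβ : β ^ 2 + t * β + N = n * c :=
        mul_left_cancel₀ four_ne_zero (by linear_combination hdisc)
      lift β to ℕ using by lia
      have hval' : (β : ZMod n).val = β := ZMod.val_cast_of_lt (by lia)
      refine ⟨⟨(β : ZMod n), ?_⟩, ?_⟩
      · simpa using (hroot β).2 ⟨c, hβ⟩
      · simp only [hval', hβ]
        congr
        exact Int.mul_ediv_cancel_left c (NeZero.ne (n : ℤ))

lemma finite_normalizedForms (t N : ℤ) {n : ℕ} (hn : n ≠ 0) :
    (normalizedForms (t ^ 2 - 4 * N) n t).Finite := by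
  have := NeZero.mk hn
  exact Set.finite_coe_iff.1 (Finite.of_equiv _ (rootsEquivNormalizedForms t N n))

lemma ncard_normalizedForms (t N : ℤ) {n : ℕ} (hn : n ≠ 0) :
    (normalizedForms (t ^ 2 - 4 * N) n t).ncard = rootCount (monicQuadratic t N) n := by
  have := NeZero.mk hn
  rw [rootCount_apply _ hn, Nat.card_congr (rootsEquivNormalizedForms t N n),
    Nat.card_coe_set_eq]

namespace IsCompleteSystem

variable {ι : Type*} {F : ι → BinaryForm} {t N : ℤ} {w : ℕ} [NeZero w]
  (hF : IsCompleteSystem F (t ^ 2 - 4 * N) w) (hD : t ^ 2 - 4 * N < 0)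

include hF hD

lemma finite_properRep_of_disc_neg (n : ℤ) : Finite (ProperRep F n) := by
  rcases le_or_gt n 0 with hn | hn
  · have := hF.isEmpty_properRep hD hn
    infer_instance
  · lift n to ℕ using hn.le
    exact hF.finite_properRep hn (finite_normalizedForms t N (by lia))

lemma card_properRep_eq_mul_rootCount (n : ℕ) :
    Nat.card (ProperRep F n) = w * rootCount (monicQuadratic t N) n := by
  rcases eq_or_ne n 0 with rfl | hn
  · have := hF.isEmpty_properRep hD (n := (0 : ℕ)) le_rfl
    simp
  · rw [hF.card_properRep (by lia) (finite_normalizedForms t N hn), ncard_normalizedForms t N hn]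

end IsCompleteSystem

/-! ### Reduction and the class group of discriminant `-15` -/

lemma exists_comp_reduced {f : BinaryForm} (ha : 0 < f.a) (hD : f.disc < 0) :
    ∃ γ : SL(2, ℤ), (f.comp γ).b ∈ Set.Ioc (-(f.comp γ).a) (f.comp γ).a ∧
      (f.comp γ).a ≤ (f.comp γ).c := by
  have hpos := comp_a_pos ha hD
  obtain ⟨γ, hmin⟩ : ∃ γ, ∀ δ, (f.comp γ).a ≤ (f.comp δ).a := by
    refine ⟨Function.argmin fun γ ↦ (f.comp γ).a.toNat, fun δ ↦ ?_⟩
    have := Function.not_lt_argmin (fun γ ↦ (f.comp γ).a.toNat) δ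
    have := hpos δ
    lia
  obtain ⟨k, ⟨hk₁, hk₂⟩, -⟩ := existsUnique_add_zsmul_mem_Ioc (a := 2 * (f.comp γ).a)
    (by linarith [hpos γ]) (f.comp γ).b (-(f.comp γ).a)
  rw [smul_eq_mul] at hk₁ hk₂
  have hT : (f.comp (γ * ModularGroup.T ^ k)).a = (f.comp γ).a := by rw [comp_mul, comp_T_zpow]
  refine ⟨γ * ModularGroup.T ^ k, ?_, ?_⟩
  · rw [comp_mul, comp_T_zpow]
    constructor <;> linarith
  · have := hmin (γ * ModularGroup.T ^ k * ModularGroup.S)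
    rwa [comp_mul, comp_S, ← hT] at this

lemma eq_one_or_eq_neg_one_of_comp_eq {f : BinaryForm} (hb : f.b = 1) (hD : f.disc < -4)
    {γ : SL(2, ℤ)} (hγ : f.comp γ = f) : γ = 1 ∨ γ = -1 := by
  have hdet := det_eq_one γ
  have hcol : γ 1 0 = f.a * (γ 1 1 - γ 0 0) ∧ γ 0 1 = -f.c * (γ 1 1 - γ 0 0) := by
    have h := BinaryForm.ext_iff.1 hγ
    simp only [comp, eval, hb] at h
    obtain ⟨ha, hb, hc⟩ := h
    constructor
    · refine mul_left_cancel₀ (two_ne_zero' ℤ) ?_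
      linear_combination 2 * γ 1 1 * ha - γ 1 0 * hb - (2 * f.a * γ 0 0 + γ 1 0) * hdet
    · refine mul_left_cancel₀ (two_ne_zero' ℤ) ?_
      linear_combination 2 * γ 0 0 * hc - γ 0 1 * hb - (γ 0 1 + 2 * f.c * γ 1 1) * hdet
  obtain ⟨hcol₁, hcol₂⟩ := hcol
  have htrace : (γ 0 0 + γ 1 1) ^ 2 - f.disc * (γ 1 1 - γ 0 0) ^ 2 = 4 := by
    rw [hcol₁, hcol₂] at hdet
    simp only [disc, hb]
    linear_combination 4 * hdet
  have hu : γ 1 1 - γ 0 0 = 0 := by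
    by_contra hu
    nlinarith [sq_nonneg (γ 0 0 + γ 1 1), Int.one_le_abs hu, sq_abs (γ 1 1 - γ 0 0)]
  rw [hu, mul_zero] at hcol₁ hcol₂
  have h11 : γ 1 1 = γ 0 0 := by lia
  have hsq : γ 0 0 ^ 2 = 1 := by
    rw [hcol₁, h11] at hdet
    linear_combination hdet
  rcases sq_eq_one_iff.1 hsq with h | h
  · left
    ext i j
    fin_cases i <;> fin_cases j <;> simp [*]
  · right
    ext i j
    fin_cases i <;> fin_cases j <;> simp [*]

/-- The reduced forms `2 x² + x y + 2 y²` and `x² + x y + 4 y²` of discriminant `-15`. -/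
def formsDisc15 : Fin 2 → BinaryForm := ![⟨2, 1, 2⟩, ⟨1, 1, 4⟩]

lemma disc_formsDisc15 (i : Fin 2) : (formsDisc15 i).disc = -15 := by
  fin_cases i <;> rfl

lemma eq_of_reduced_of_disc_eq {f : BinaryForm} (hD : f.disc = -15) (hb : f.b ∈ Set.Ioc (-f.a) f.a)
    (hac : f.a ≤ f.c) : f = ⟨1, 1, 4⟩ ∨ f = ⟨2, 1, 2⟩ ∨ f = ⟨2, -1, 2⟩ := by
  obtain ⟨a, b, c⟩ := f
  obtain ⟨hb₁, hb₂⟩ := hb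
  simp only [disc] at hD hb₁ hb₂ hac
  have ha : a ≤ 2 := by nlinarith
  simp only [BinaryForm.mk.injEq]
  obtain rfl | rfl : a = 1 ∨ a = 2 := by lia
  all_goals interval_cases b <;> lia

lemma exists_formsDisc15_comp_eq {g : BinaryForm} (hD : g.disc = -15) (ha : 0 < g.a) :
    ∃ i γ, (formsDisc15 i).comp γ = g := by
  obtain ⟨γ, hb, hac⟩ := exists_comp_reduced ha (by rw [hD]; norm_num)
  rcases eq_of_reduced_of_disc_eq (by rw [disc_comp, hD]) hb hac with h | h | h
  · exact ⟨1, γ⁻¹, (comp_eq_iff_eq_comp_inv.1 h).symm⟩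
  · exact ⟨0, γ⁻¹, (comp_eq_iff_eq_comp_inv.1 h).symm⟩
  · have hS : g.comp (γ * ModularGroup.S) = ⟨2, 1, 2⟩ := by
      rw [comp_mul, h, comp_S]
      rfl
    exact ⟨0, (γ * ModularGroup.S)⁻¹, (comp_eq_iff_eq_comp_inv.1 hS).symm⟩

lemma eq_of_formsDisc15_comp_eq {i j : Fin 2} {γ : SL(2, ℤ)}
    (h : (formsDisc15 i).comp γ = formsDisc15 j) : i = j := by
  have h₀ : ∀ x y : ZMod 3, 2 * x ^ 2 + 1 * x * y + 2 * y ^ 2 ≠ 1 := by decide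
  have h₁ : ∀ x y : ZMod 3, 1 * x ^ 2 + 1 * x * y + 4 * y ^ 2 ≠ 2 := by decide
  have ha : (((formsDisc15 i).comp γ).a : ZMod 3) = (formsDisc15 j).a := by rw [h]
  fin_cases i <;> fin_cases j
  · rfl
  · exact absurd (mod_cast ha) (h₀ (γ 0 0) (γ 1 0))
  · exact absurd (mod_cast ha) (h₁ (γ 0 0) (γ 1 0))
  · rfl

lemma formsDisc15_comp_eq_comp_iff {i j : Fin 2} {γ δ : SL(2, ℤ)} :
    (formsDisc15 j).comp δ = (formsDisc15 i).comp γ ↔ j = i ∧ (δ = γ ∨ δ = -γ) := by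
  constructor
  · intro h
    rw [eq_comm, comp_eq_iff_eq_comp_inv, ← comp_mul, eq_comm] at h
    obtain rfl := eq_of_formsDisc15_comp_eq h
    have hb : (formsDisc15 j).b = 1 := by fin_cases j <;> rfl
    refine ⟨rfl, (eq_one_or_eq_neg_one_of_comp_eq hb (by simp [disc_formsDisc15]) h).imp ?_ ?_⟩
    · exact mul_inv_eq_one.1
    · rw [mul_inv_eq_iff_eq_mul, neg_one_mul]; exact id
  · rintro ⟨rfl, rfl | rfl⟩ <;> simp

lemma card_formsDisc15_comp_eq {g : BinaryForm} (hD : g.disc = -15) (ha : 0 < g.a) :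
    Nat.card {q : Fin 2 × SL(2, ℤ) // (formsDisc15 q.1).comp q.2 = g} = 2 := by
  obtain ⟨i, γ, rfl⟩ := exists_formsDisc15_comp_eq hD ha
  have hset : {q : Fin 2 × SL(2, ℤ) | (formsDisc15 q.1).comp q.2 = (formsDisc15 i).comp γ} =
      {(i, γ), (i, -γ)} := by
    ext ⟨j, δ⟩
    simp [formsDisc15_comp_eq_comp_iff, ← and_or_left]
  have hne : γ ≠ -γ := by
    intro h
    have hzero (k : Fin 2) : γ k 0 = 0 :=
      self_eq_neg.1 (congrArg (fun δ : SL(2, ℤ) ↦ δ k 0) h)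
    simpa [hzero] using det_eq_one γ
  calc _ = Set.ncard {(i, γ), (i, -γ)} := by rw [← hset]; rfl
    _ = 2 := Set.ncard_pair (by simpa using hne)

lemma isCompleteSystem_formsDisc15 : IsCompleteSystem formsDisc15 (-15) 2 where
  a_pos i := by fin_cases i <;> decide
  disc_eq := disc_formsDisc15
  card_comp_eq := card_formsDisc15_comp_eq

end BinaryForm

/-! ### The character `χ₋₁₅` and the roots of `x² + x + 4` -/

section Character

open scoped ArithmeticFunction.Moebius NumberTheorySymbols

open ArithmeticFunction

lemma chiNeg15_eq_jacobiSym (n : ℕ) : chiNeg15 n = J(n | 15) := by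
  have hmod : chiNeg15 n = chiNeg15 (n % 15) := by
    simp only [chiNeg15, chiNeg3, chi5, Nat.mod_mod_of_dvd n (show 3 ∣ 15 by norm_num),
      Nat.mod_mod_of_dvd n (show 5 ∣ 15 by norm_num)]
  have hlt := n.mod_lt (show 0 < 15 by norm_num)
  rw [hmod, jacobiSym.mod_left, ← Int.natCast_mod]
  interval_cases n % 15 <;> norm_num [chiNeg15, chiNeg3, chi5]

lemma legendreSym_neg_fifteen {p : ℕ} [Fact p.Prime] (hp : p ≠ 2) :
    legendreSym p (-15) = chiNeg15 p := by
  have hodd : Odd p := (Fact.out : p.Prime).odd_of_ne_two hp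
  rw [chiNeg15_eq_jacobiSym, jacobiSym.legendreSym.to_jacobiSym,
    show (-15 : ℤ) = -((15 : ℕ) : ℤ) by norm_num, jacobiSym.neg _ hodd,
    ZMod.χ₄_nat_eq_if_mod_four,
    ← jacobiSym.quadratic_reciprocity_if (a := 15) (b := p) (by norm_num) (Nat.odd_iff.1 hodd)]
  have hmod : p % 2 = 1 := Nat.odd_iff.1 hodd
  obtain h | h : p % 4 = 1 ∨ p % 4 = 3 := by lia
  all_goals simp [h, hmod]

lemma rootCount_monicQuadratic_one_four_prime {p : ℕ} (hp : p.Prime) :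
    (rootCount (monicQuadratic 1 4) p : ℤ) = 1 + chiNeg15 p := by
  have := Fact.mk hp
  rcases eq_or_ne p 2 with rfl | h2
  · simp only [rootCount_apply _ two_ne_zero, aeval_monicQuadratic, Nat.card_eq_fintype_card]
    decide
  · rw [rootCount_monicQuadratic_prime h2, ← legendreSym_neg_fifteen h2]
    norm_num

/-- The character `χ₋₁₅` as an arithmetic function. -/
def arithChi : ArithmeticFunction ℤ := ⟨fun n ↦ chiNeg15 n, by decide⟩

lemma arithChi_apply (n : ℕ) : arithChi n = J(n | 15) := chiNeg15_eq_jacobiSym n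

lemma arithChi_pow (n k : ℕ) : arithChi (n ^ k) = arithChi n ^ k := by
  rw [arithChi_apply, arithChi_apply, Nat.cast_pow, jacobiSym.pow_left]

lemma isMultiplicative_arithChi : arithChi.IsMultiplicative := by
  refine ⟨by decide, fun {m n} _ ↦ ?_⟩
  rw [arithChi_apply, arithChi_apply, arithChi_apply, Nat.cast_mul, jacobiSym.mul_left]

lemma rootCount_monicQuadratic_one_four_prime_pow {p : ℕ} (hp : p.Prime) (j : ℕ) :
    (rootCount (monicQuadratic 1 4) (p ^ (j + 1)) : ℤ) =
      arithChi (p ^ (j + 1)) + arithChi (p ^ j) := by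
  have hχ : chiNeg15 p = arithChi p := rfl
  simp only [arithChi_pow]
  have hD : (p : ℤ) ∣ 1 ^ 2 - 4 * 4 ↔ p ∣ 15 := by
    rw [show (1 ^ 2 - 4 * 4 : ℤ) = -(15 : ℕ) by norm_num, dvd_neg, Int.natCast_dvd_natCast]
  have hgcd : (p : ℤ).gcd (15 : ℕ) = 1 ↔ ¬p ∣ 15 := hp.coprime_iff_not_dvd
  by_cases h15 : p ∣ 15
  · have hp0 : arithChi p = 0 := by
      rw [arithChi_apply, jacobiSym.eq_zero_iff_not_coprime, Ne, hgcd, not_not]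
      exact h15
    have hD' : ¬(p : ℤ) ^ 2 ∣ 1 ^ 2 - 4 * 4 := by
      rw [show (1 ^ 2 - 4 * 4 : ℤ) = -(15 : ℕ) by norm_num, dvd_neg, ← Nat.cast_pow,
        Int.natCast_dvd_natCast, sq]
      have h_squarefree : Squarefree (3 * 5) := (Nat.squarefree_mul (by norm_num)).2
        ⟨Nat.prime_three.prime.squarefree, Nat.prime_five.prime.squarefree⟩
      exact fun h ↦ hp.not_isUnit (h_squarefree p h)
    rcases j with _ | j
    · simp [rootCount_monicQuadratic_one_four_prime hp, hχ, hp0]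
    · rw [rootCount_monicQuadratic_prime_pow_of_dvd hp (hD.2 h15) hD']
      simp [hp0]
  · have hp1 : arithChi p = 1 ∨ arithChi p = -1 := by
      rw [arithChi_apply]
      exact jacobiSym.eq_one_or_neg_one (hgcd.2 h15)
    rw [rootCount_monicQuadratic_prime_pow hp (hD.not.2 h15),
      rootCount_monicQuadratic_one_four_prime hp, hχ]
    rcases hp1 with h | h <;> simp [h, pow_succ]

lemma ppow_moebius_two_mul_apply_prime_pow {p : ℕ} (hp : p.Prime) (g : ArithmeticFunction ℤ)
    (j : ℕ) : (ppow μ 2 * g) (p ^ (j + 1)) = g (p ^ (j + 1)) + g (p ^ j) := by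
  rw [mul_apply, Nat.sum_divisorsAntidiagonal fun x y ↦ ppow μ 2 x * g y,
    Nat.sum_divisors_prime_pow hp, Finset.sum_range_succ', Finset.sum_range_succ']
  have hvanish (i : ℕ) : ppow μ 2 (p ^ (i + 1 + 1)) = 0 := by
    rw [ppow_apply two_pos, moebius_apply_prime_pow hp (by lia), if_neg (by lia),
      zero_pow two_ne_zero]
  have hdiv : p ^ (j + 1) / p = p ^ j := by
    rw [pow_succ, Nat.mul_div_cancel _ hp.pos]
  simp only [hvanish, zero_mul, Finset.sum_const_zero]
  simp [ppow_apply, moebius_apply_prime hp, hdiv, add_comm]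

lemma coe_rootCount_monicQuadratic_one_four :
    (rootCount (monicQuadratic 1 4) : ArithmeticFunction ℤ) = ppow μ 2 * arithChi := by
  have hρ : (rootCount (monicQuadratic 1 4) : ArithmeticFunction ℤ).IsMultiplicative :=
    (isMultiplicative_rootCount _).natCast
  have hconv : (ppow μ 2 * arithChi).IsMultiplicative :=
    isMultiplicative_moebius.ppow.mul isMultiplicative_arithChi
  refine (IsMultiplicative.eq_iff_eq_on_prime_powers _ hρ _ hconv).2 fun p k hp ↦ ?_
  rcases k with _ | j
  · rw [pow_zero, hρ.map_one, hconv.map_one]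
  · rw [ppow_moebius_two_mul_apply_prime_pow hp, natCoe_apply,
      rootCount_monicQuadratic_one_four_prime_pow hp]

end Character

/-! ### Sums over fibres and over lattice vectors -/

section Sums

lemma summable_norm_comp_of_summable_card_fiber {X Y E : Type*} [NormedAddCommGroup E]
    {N : X → Y} {f : Y → E} (hN : ∀ y, Finite {x // N x = y})
    (h : Summable fun y ↦ Nat.card {x // N x = y} * ‖f y‖) : Summable fun x ↦ ‖f (N x)‖ := by
  rw [← (Equiv.sigmaFiberEquiv N).summable_iff]
  refine (summable_sigma_of_nonneg fun _ ↦ norm_nonneg _).2 ⟨fun y ↦ .of_finite, h.congr fun y ↦ ?_⟩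
  have hfib (x : {x // N x = y}) : ‖f (N x)‖ = ‖f y‖ := by rw [x.2]
  change _ = ∑' x : {x // N x = y}, ‖f (N x)‖
  rw [tsum_congr hfib, tsum_const, nsmul_eq_mul]

lemma tsum_comp_eq_tsum_card_fiber_smul {X Y E : Type*} [NormedAddCommGroup E] [CompleteSpace E]
    {N : X → Y} {f : Y → E} (h : Summable fun x ↦ f (N x)) :
    ∑' x, f (N x) = ∑' y, Nat.card {x // N x = y} • f y := by
  rw [← (Equiv.sigmaFiberEquiv N).tsum_eq]
  refine ((Equiv.sigmaFiberEquiv N).summable_iff.2 h).tsum_sigma.trans (tsum_congr fun y ↦ ?_)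
  have hfib (x : {x // N x = y}) : f (N x) = f y := by rw [x.2]
  change ∑' x : {x // N x = y}, f (N x) = _
  rw [tsum_congr hfib, tsum_const]

/-- Every nonzero vector of `ℤ²` is uniquely a positive multiple of a primitive vector. -/
noncomputable def pnatProdCoprimeEquiv :
    ℕ+ × {v : ℤ × ℤ // IsCoprime v.1 v.2} ≃ {v : ℤ × ℤ // v ≠ 0} :=
  Equiv.ofBijective (fun q ↦ ⟨(q.1 : ℤ) • q.2.1, smul_ne_zero (by simp) fun h ↦
    not_isCoprime_zero_zero (R := ℤ) (by simpa [h] using q.2.2)⟩) <| by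
    constructor
    · rintro ⟨d, ⟨⟨x, y⟩, hxy⟩⟩ ⟨e, ⟨⟨z, w⟩, hzw⟩⟩ h
      have h : ((d : ℤ) • (x, y) : ℤ × ℤ) = (e : ℤ) • (z, w) := congrArg Subtype.val h
      have hgcd := congrArg (fun v : ℤ × ℤ ↦ Int.gcd v.1 v.2) h
      simp only [Prod.smul_mk, smul_eq_mul, Int.gcd_mul_left, Int.isCoprime_iff_gcd_eq_one.1 hxy,
        Int.isCoprime_iff_gcd_eq_one.1 hzw, Int.natAbs_natCast, mul_one] at hgcd
      obtain rfl := PNat.eq hgcd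
      have hv : (x, y) = (z, w) := smul_right_injective _ (r := (d : ℤ)) (by simp) h
      simp only [hv]
    · rintro ⟨⟨x, y⟩, hxy⟩
      have hpos : 0 < Int.gcd x y := Int.gcd_pos_iff.2 (by simpa [or_iff_not_imp_left] using hxy)
      obtain ⟨x', y', hcop, hx, hy⟩ := Int.exists_gcd_one hpos
      refine ⟨(⟨Int.gcd x y, hpos⟩, ⟨(x', y'), Int.isCoprime_iff_gcd_eq_one.2 hcop⟩), ?_⟩
      ext
      · simpa [mul_comm] using hx.symm
      · simpa [mul_comm] using hy.symm

lemma tsum_ne_zero_eq_tsum_mul_tsum_isCoprime {R : Type*} [NormedRing R] [CompleteSpace R]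
    {f : ℤ × ℤ → R} {g : ℕ+ → R} (hfg : ∀ (d : ℕ+) v, f ((d : ℤ) • v) = g d * f v)
    (hg : Summable (‖g ·‖)) (hf : Summable fun v : {v : ℤ × ℤ // IsCoprime v.1 v.2} ↦ ‖f v‖) :
    ∑' v : {v : ℤ × ℤ // v ≠ 0}, f v =
      (∑' d, g d) * ∑' v : {v : ℤ × ℤ // IsCoprime v.1 v.2}, f v := by
  rw [tsum_mul_tsum_of_summable_norm hg hf, ← pnatProdCoprimeEquiv.tsum_eq]
  exact tsum_congr fun q ↦ hfg q.1 q.2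

end Sums

/-! ### Dirichlet series -/

section LSeries

open ArithmeticFunction
open scoped ArithmeticFunction.Moebius

variable {s : ℂ}

lemma hasProd_LSeries_of_isMultiplicative {f : ArithmeticFunction ℂ} (hf : f.IsMultiplicative)
    (hsum : LSeriesSummable f s) :
    HasProd (fun p : Nat.Primes ↦ ∑' e : ℕ, f (p ^ e) * ((p : ℂ) ^ (-s)) ^ e) (LSeries f s) := by
  have hterm (n : ℕ) : LSeries.term f s n = f n * (n : ℂ) ^ (-s) := by
    rcases eq_or_ne n 0 with rfl | hn
    · simp
    · rw [LSeries.term_of_ne_zero hn, Complex.cpow_neg, div_eq_mul_inv]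
  have hmul {m n : ℕ} (hmn : m.Coprime n) :
      LSeries.term f s (m * n) = LSeries.term f s m * LSeries.term f s n := by
    rw [hterm, hterm, hterm, hf.map_mul_of_coprime hmn, Nat.cast_mul,
      Complex.natCast_mul_natCast_cpow]
    ring
  have hpow (p e : ℕ) : LSeries.term f s (p ^ e) = f (p ^ e) * ((p : ℂ) ^ (-s)) ^ e := by
    rw [hterm, Nat.cast_pow, ← Complex.natCast_cpow_natCast_mul, ← Complex.cpow_nat_mul]
  have hprod := EulerProduct.eulerProduct_hasProd (by simp [hf.map_one]) hmul hsum.norm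
    (LSeries.term_zero f s)
  simp only [hpow] at hprod
  exact hprod

lemma LSeriesSummable_intCast_of_abs_le_one {f : ℕ → ℤ} (hf : ∀ n, |f n| ≤ 1) (hs : 1 < s.re) :
    LSeriesSummable (fun n ↦ (f n : ℂ)) s :=
  LSeriesSummable_of_bounded_of_one_lt_re (m := 1)
    (fun n _ ↦ by rw [Complex.norm_intCast]; exact_mod_cast hf n) hs

lemma LSeriesSummable_moebius_sq (hs : 1 < s.re) :
    LSeriesSummable (fun n ↦ ((μ n ^ 2 : ℤ) : ℂ)) s :=
  LSeriesSummable_intCast_of_abs_le_one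
    (fun n ↦ by rw [abs_pow]; exact pow_le_one₀ (abs_nonneg _) abs_moebius_le_one) hs

lemma one_lt_re_two_mul (hs : 1 < s.re) : 1 < (2 * s).re := by
  rw [Complex.mul_re, Complex.re_ofNat, Complex.im_ofNat]
  linarith

lemma coe_ppow_moebius_two :
    ⇑((ppow μ 2 : ArithmeticFunction ℤ) : ArithmeticFunction ℂ) =
      fun n ↦ ((μ n ^ 2 : ℤ) : ℂ) := by
  funext n
  rw [intCoe_apply, ppow_apply two_pos]

lemma riemannZeta_two_mul_mul_LSeries_moebius_sq (hs : 1 < s.re) :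
    riemannZeta (2 * s) * LSeries (fun n ↦ ((μ n ^ 2 : ℤ) : ℂ)) s = riemannZeta s := by
  have hlocal (p : Nat.Primes) :
      ∑' e : ℕ, ((μ (p ^ e) ^ 2 : ℤ) : ℂ) * ((p : ℂ) ^ (-s)) ^ e = 1 + (p : ℂ) ^ (-s) := by
    rw [tsum_eq_sum (s := Finset.range 2)]
    · simp [Finset.sum_range_succ, moebius_apply_prime p.2]
    · intro e he
      rw [Finset.mem_range] at he
      rw [moebius_apply_prime_pow p.2 (by lia), if_neg (by lia), sq, zero_mul, Int.cast_zero,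
        zero_mul]
  have hmoebius := hasProd_LSeries_of_isMultiplicative (s := s)
    (isMultiplicative_moebius.ppow (k := 2)).intCast
    (by rw [coe_ppow_moebius_two]; exact LSeriesSummable_moebius_sq hs)
  simp only [coe_ppow_moebius_two, hlocal] at hmoebius
  refine ((riemannZeta_eulerProduct_hasProd (one_lt_re_two_mul hs)).mul hmoebius).unique ?_
  convert riemannZeta_eulerProduct_hasProd hs using 2 with p
  have hsq : 1 - (p : ℂ) ^ (-(2 * s)) = (1 - (p : ℂ) ^ (-s)) * (1 + (p : ℂ) ^ (-s)) := by
    rw [← mul_neg, ← Nat.cast_two, Complex.cpow_nat_mul]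
    ring
  have hne := Complex.one_sub_prime_cpow_ne_zero p.2 (one_lt_re_two_mul hs)
  rw [hsq] at hne ⊢
  rw [inv_mul_eq_iff_eq_mul₀ hne, mul_right_comm, mul_inv_cancel₀ (left_ne_zero_of_mul hne),
    one_mul]

lemma LSeriesSummable_chiNeg15 (hs : 1 < s.re) : LSeriesSummable (fun n ↦ (chiNeg15 n : ℂ)) s := by
  refine LSeriesSummable_intCast_of_abs_le_one (fun n ↦ ?_) hs
  rw [chiNeg15_eq_jacobiSym]
  rcases jacobiSym.trichotomy n 15 with h | h | h <;> simp [h]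

lemma LSeries_chiNeg15 (hs : 1 < s.re) :
    LSeries (fun n ↦ (chiNeg15 n : ℂ)) s = LSer chiNeg15 s := by
  rw [LSeries, (LSeriesSummable_chiNeg15 hs).tsum_eq_zero_add, LSer, LSeries.term_zero, zero_add]
  refine tsum_congr fun n ↦ ?_
  rw [LSeries.term_of_ne_zero n.succ_ne_zero, Nat.cast_add_one]

lemma coe_rootCount_monicQuadratic_one_four_eq_mul :
    (fun n ↦ (rootCount (monicQuadratic 1 4) n : ℂ)) =
      ⇑((ppow μ 2 : ArithmeticFunction ℤ) * arithChi : ArithmeticFunction ℂ) := by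
  funext n
  rw [← intCoe_mul, ← coe_rootCount_monicQuadratic_one_four, intCoe_apply, natCoe_apply,
    Int.cast_natCast]

lemma LSeriesSummable_rootCount_monicQuadratic_one_four (hs : 1 < s.re) :
    LSeriesSummable (fun n ↦ (rootCount (monicQuadratic 1 4) n : ℂ)) s := by
  rw [coe_rootCount_monicQuadratic_one_four_eq_mul]
  exact LSeriesSummable_mul (by rw [coe_ppow_moebius_two]; exact LSeriesSummable_moebius_sq hs)
    (LSeriesSummable_chiNeg15 hs)

lemma riemannZeta_two_mul_mul_LSeries_rootCount (hs : 1 < s.re) :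
    riemannZeta (2 * s) * LSeries (fun n ↦ (rootCount (monicQuadratic 1 4) n : ℂ)) s =
      riemannZeta s * LSer chiNeg15 s := by
  have hmul := LSeries_mul' (f := (ppow μ 2 : ArithmeticFunction ℤ)) (g := arithChi)
    (by rw [coe_ppow_moebius_two]; exact LSeriesSummable_moebius_sq hs)
    (LSeriesSummable_chiNeg15 hs)
  have hchi : ⇑(arithChi : ArithmeticFunction ℂ) = fun n ↦ (chiNeg15 n : ℂ) := rfl
  rw [coe_rootCount_monicQuadratic_one_four_eq_mul, hmul, ← mul_assoc, coe_ppow_moebius_two,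
    riemannZeta_two_mul_mul_LSeries_moebius_sq hs, hchi, LSeries_chiNeg15 hs]

end LSeries

namespace BinaryForm

variable {ι : Type*} {F : ι → BinaryForm} {t N : ℤ} {w : ℕ} {s : ℂ}

lemma one_div_eval_smul_cpow {f : BinaryForm} (ha : 0 < f.a) (hD : f.disc < 0) (d : ℕ+)
    (v : ℤ × ℤ) :
    1 / (f.eval ((d : ℤ) • v).1 ((d : ℤ) • v).2 : ℂ) ^ s =
      1 / (d : ℂ) ^ (2 * s) * (1 / (f.eval v.1 v.2 : ℂ) ^ s) := by
  obtain ⟨n, hn⟩ : ∃ n : ℕ, f.eval v.1 v.2 = n := Int.eq_ofNat_of_zero_le <| by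
    rcases eq_or_ne v 0 with rfl | hv
    · simp [eval]
    · exact (eval_pos ha hD hv).le
  have hd : (d : ℂ) ^ (2 * s) = (((d : ℕ) ^ 2 : ℕ) : ℂ) ^ s := by
    rw [Nat.cast_pow, ← Complex.natCast_cpow_natCast_mul, Nat.cast_two]
  rw [Prod.smul_fst, Prod.smul_snd, smul_eq_mul, smul_eq_mul, eval_mul, hn, hd,
    one_div_mul_one_div, Int.cast_natCast, ← Complex.natCast_mul_natCast_cpow]
  push_cast
  rfl

lemma tsum_one_div_eval_cpow_eq_zeta_mul [Fintype ι] (ha : ∀ i, 0 < (F i).a)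
    (hD : ∀ i, (F i).disc < 0) (hs : 1 < s.re)
    (hsum : Summable fun r : ι × {v : ℤ × ℤ // IsCoprime v.1 v.2} ↦
      ‖1 / ((F r.1).eval r.2.1.1 r.2.1.2 : ℂ) ^ s‖) :
    ∑' v : {v : ℤ × ℤ // v ≠ 0}, ∑ i, 1 / ((F i).eval v.1.1 v.1.2 : ℂ) ^ s =
      riemannZeta (2 * s) * ∑' r : ι × {v : ℤ × ℤ // IsCoprime v.1 v.2},
        1 / ((F r.1).eval r.2.1.1 r.2.1.2 : ℂ) ^ s := by
  have hs2 := one_lt_re_two_mul hs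
  have hzeta : ∑' d : ℕ+, 1 / (d : ℂ) ^ (2 * s) = riemannZeta (2 * s) := by
    rw [zeta_eq_tsum_one_div_nat_add_one_cpow hs2,
      tsum_pnat_eq_tsum_succ (f := fun n : ℕ ↦ 1 / (n : ℂ) ^ (2 * s))]
    simp only [Nat.cast_add_one]
  have hzeta_sum : Summable fun d : ℕ+ ↦ ‖1 / (d : ℂ) ^ (2 * s)‖ :=
    (Complex.summable_one_div_nat_cpow.2 hs2).norm.comp_injective PNat.coe_injective
  have hsum' : Summable fun v : {v : ℤ × ℤ // IsCoprime v.1 v.2} ↦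
      ‖∑ i, 1 / ((F i).eval v.1.1 v.1.2 : ℂ) ^ s‖ :=
    (summable_sum fun i _ ↦ hsum.comp_injective (Prod.mk_right_injective i)).of_nonneg_of_le
      (fun _ ↦ norm_nonneg _) fun _ ↦ norm_sum_le _ _
  have hcomm : ∑' r : ι × {v : ℤ × ℤ // IsCoprime v.1 v.2},
        1 / ((F r.1).eval r.2.1.1 r.2.1.2 : ℂ) ^ s =
      ∑' v : {v : ℤ × ℤ // IsCoprime v.1 v.2}, ∑ i, 1 / ((F i).eval v.1.1 v.1.2 : ℂ) ^ s := by
    rw [hsum.of_norm.tsum_prod, tsum_fintype]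
    exact (Summable.tsum_finsetSum fun i _ ↦
      hsum.of_norm.comp_injective (Prod.mk_right_injective i)).symm
  rw [hcomm, ← hzeta]
  refine tsum_ne_zero_eq_tsum_mul_tsum_isCoprime
    (f := fun v ↦ ∑ i, 1 / ((F i).eval v.1 v.2 : ℂ) ^ s) (fun d v ↦ ?_) hzeta_sum hsum'
  simp only [one_div_eval_smul_cpow (ha _) (hD _), Finset.mul_sum]

namespace IsCompleteSystem

variable [NeZero w] (hF : IsCompleteSystem F (t ^ 2 - 4 * N) w) (hD : t ^ 2 - 4 * N < 0)
  (hsum : LSeriesSummable (fun n ↦ (rootCount (monicQuadratic t N) n : ℂ)) s)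

include hF hD hsum

lemma hasSum_card_properRep :
    HasSum (fun n : ℤ ↦ Nat.card (ProperRep F n) • (1 / (n : ℂ) ^ s))
      (w * LSeries (fun n ↦ (rootCount (monicQuadratic t N) n : ℂ)) s) := by
  have hterm (n : ℕ) : Nat.card (ProperRep F n) • (1 / ((n : ℤ) : ℂ) ^ s) =
      w * LSeries.term (fun n ↦ (rootCount (monicQuadratic t N) n : ℂ)) s n := by
    rw [hF.card_properRep_eq_mul_rootCount hD, nsmul_eq_mul, Nat.cast_mul, mul_assoc]
    rcases eq_or_ne n 0 with rfl | hn
    · simp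
    · rw [LSeries.term_of_ne_zero hn, mul_one_div, Int.cast_natCast]
  rw [← Nat.cast_injective.hasSum_iff fun n hn ↦ ?_]
  · exact (hsum.hasSum.mul_left (w : ℂ)).congr_fun hterm
  · have := hF.isEmpty_properRep hD (n := n) <| by
      by_contra! h
      exact hn ⟨n.toNat, Int.toNat_of_nonneg h.le⟩
    rw [Nat.card_of_isEmpty, zero_smul]

lemma summable_norm_one_div_eval_cpow :
    Summable fun r : ι × {v : ℤ × ℤ // IsCoprime v.1 v.2} ↦
      ‖1 / ((F r.1).eval r.2.1.1 r.2.1.2 : ℂ) ^ s‖ := by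
  refine summable_norm_comp_of_summable_card_fiber
    (N := fun r : ι × {v : ℤ × ℤ // IsCoprime v.1 v.2} ↦ (F r.1).eval r.2.1.1 r.2.1.2)
    (f := fun n : ℤ ↦ 1 / (n : ℂ) ^ s) (hF.finite_properRep_of_disc_neg hD) ?_
  refine (hF.hasSum_card_properRep hD hsum).summable.norm.congr fun n ↦ ?_
  rw [nsmul_eq_mul, norm_mul, Complex.norm_natCast]

theorem tsum_one_div_eval_cpow [Fintype ι] (hs : 1 < s.re) :
    ∑' v : {v : ℤ × ℤ // v ≠ 0}, ∑ i, 1 / ((F i).eval v.1.1 v.1.2 : ℂ) ^ s =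
      w * (riemannZeta (2 * s) *
        LSeries (fun n ↦ (rootCount (monicQuadratic t N) n : ℂ)) s) := by
  have hsummable := hF.summable_norm_one_div_eval_cpow hD hsum
  rw [tsum_one_div_eval_cpow_eq_zeta_mul hF.a_pos (fun i ↦ by rwa [hF.disc_eq]) hs hsummable,
    mul_left_comm, ← (hF.hasSum_card_properRep hD hsum).tsum_eq]
  exact congrArg _ (tsum_comp_eq_tsum_card_fiber_smul (f := fun n : ℤ ↦ 1 / (n : ℂ) ^ s)
    hsummable.of_norm)

end IsCompleteSystem

end BinaryForm

/-- Lemma 3.3 (1): for `Re(s) > 1`,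
`∑'_{(m,k)≠0} [ (2m²+mk+2k²)^{-s} + (m²+mk+4k²)^{-s} ] = 2 ζ(s) L(χ₋₁₅, s)`. -/
theorem lattice_sum_eq_two_zeta_L (s : ℂ) (hs : 1 < s.re) :
    (∑' p : {p : ℤ × ℤ // p ≠ 0},
        (1 / ((2 * (p.1.1 : ℂ) ^ 2 + (p.1.1 : ℂ) * (p.1.2 : ℂ) + 2 * (p.1.2 : ℂ) ^ 2) ^ s) +
          1 / (((p.1.1 : ℂ) ^ 2 + (p.1.1 : ℂ) * (p.1.2 : ℂ) + 4 * (p.1.2 : ℂ) ^ 2) ^ s))) =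
      2 * riemannZeta s * LSer chiNeg15 s := by
  calc _ = ∑' v : {v : ℤ × ℤ // v ≠ 0},
        ∑ i, 1 / ((BinaryForm.formsDisc15 i).eval v.1.1 v.1.2 : ℂ) ^ s := by
        simp [Fin.sum_univ_two, BinaryForm.formsDisc15, BinaryForm.eval]
    _ = (2 : ℕ) * (riemannZeta (2 * s) *
        LSeries (fun n ↦ (rootCount (monicQuadratic 1 4) n : ℂ)) s) :=
      BinaryForm.isCompleteSystem_formsDisc15.tsum_one_div_eval_cpow (by norm_num)
        (LSeriesSummable_rootCount_monicQuadratic_one_four hs) hs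
    _ = 2 * riemannZeta s * LSer chiNeg15 s := by
      rw [riemannZeta_two_mul_mul_LSeries_rootCount hs, Nat.cast_two, mul_assoc]
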